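/- arXiv:2408.02506 — 2 statements merged into one kernel-verified Lean document; each statement's English description precedes it below -/
import Mathlib

section
/- The max-relative entropy of bidirectional classical communication is bounded below by minus the bipartite conditional min-entropies: let J, indexed by A₀ × A₁ × B₀ × B₁, be the Choi matrix of a bipartite channel. Then Λ(J) ≥ μ(Tr_{A₁} J) and Λ(J) ≥ μ'(Tr_{B₁} J). Concretely, whenever (λ, Y) is feasible for Λ(J), the matrix X := (1/|A₀|) • Tr_{A₀A₁} Y satisfies Tr_{B₁} X = λ • I_{B₀} and Tr_{A₁} J ≤ I_{A₀} ⊗ X, and symmetrically for μ'. (This is the key inequality 𝔇_max^↔(N) ≥ max{−H_min(𝐀|𝐁)_N, −H_min(𝐁|𝐀)_N} underlying the lower bound on the asymptotic exact bidirectional classical communication cost.) -/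
open Matrix
open scoped ComplexOrder

noncomputable section

/-- Loewner order on complex matrices: `M ≤ N` iff `N - M` is positive semidefinite. -/
def LoewnerLE {n : Type*} [Fintype n] (M N : Matrix n n ℂ) : Prop := (N - M).PosSemidef

/-- `π_S ⊗ X`, the maximally mixed state on `S` tensored with `X`. -/
def piFst {S T : Type*} [Fintype S] [DecidableEq S] (X : Matrix T T ℂ) :
    Matrix (S × T) (S × T) ℂ :=
  fun x y => ((Fintype.card S : ℂ))⁻¹ * (if x.1 = y.1 then 1 else 0) * X x.2 y.2

/-- `I_S ⊗ X`, the identity on `S` tensored with `X`. -/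
def idFst {S T : Type*} [DecidableEq S] (X : Matrix T T ℂ) :
    Matrix (S × T) (S × T) ℂ :=
  fun x y => (if x.1 = y.1 then 1 else 0) * X x.2 y.2

/-- Partial trace over the second tensor factor. -/
def trOut {S T : Type*} [Fintype T] (X : Matrix (S × T) (S × T) ℂ) : Matrix S S ℂ :=
  fun s s' => ∑ t : T, X (s, t) (s', t)

/-- Partial trace over the first tensor factor. -/
def trInp {S T : Type*} [Fintype S] (X : Matrix (S × T) (S × T) ℂ) : Matrix T T ℂ :=
  fun t t' => ∑ s : S, X (s, t) (s, t')

section FourSystems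

variable {A₀ A₁ B₀ B₁ : Type*} [Fintype A₀] [Fintype A₁] [Fintype B₀] [Fintype B₁]
  [DecidableEq A₀] [DecidableEq A₁] [DecidableEq B₀] [DecidableEq B₁]

/-- `Tr_{A₁}` of a matrix on `A₀ × A₁ × B₀ × B₁`. -/
def trA1 (J : Matrix (A₀ × A₁ × B₀ × B₁) (A₀ × A₁ × B₀ × B₁) ℂ) :
    Matrix (A₀ × B₀ × B₁) (A₀ × B₀ × B₁) ℂ :=
  fun x y => ∑ a : A₁, J (x.1, a, x.2) (y.1, a, y.2)

/-- `Tr_{B₁}` of a matrix on `A₀ × A₁ × B₀ × B₁`. -/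
def trB1 (J : Matrix (A₀ × A₁ × B₀ × B₁) (A₀ × A₁ × B₀ × B₁) ℂ) :
    Matrix (A₀ × A₁ × B₀) (A₀ × A₁ × B₀) ℂ :=
  fun x y => ∑ b : B₁, J (x.1, x.2.1, x.2.2, b) (y.1, y.2.1, y.2.2, b)

/-- `Tr_{A₀A₁}` of a matrix on `A₀ × A₁ × B₀ × B₁`. -/
def trA0A1 (J : Matrix (A₀ × A₁ × B₀ × B₁) (A₀ × A₁ × B₀ × B₁) ℂ) :
    Matrix (B₀ × B₁) (B₀ × B₁) ℂ :=
  fun x y => ∑ a₀ : A₀, ∑ a₁ : A₁, J (a₀, a₁, x) (a₀, a₁, y)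

/-- `Tr_{B₀B₁}` of a matrix on `A₀ × A₁ × B₀ × B₁`. -/
def trB0B1 (J : Matrix (A₀ × A₁ × B₀ × B₁) (A₀ × A₁ × B₀ × B₁) ℂ) :
    Matrix (A₀ × A₁) (A₀ × A₁) ℂ :=
  fun x y => ∑ b₀ : B₀, ∑ b₁ : B₁, J (x.1, x.2, b₀, b₁) (y.1, y.2, b₀, b₁)

/-- `Tr_{A₁B₁}` of a matrix on `A₀ × A₁ × B₀ × B₁`. -/
def trA1B1 (J : Matrix (A₀ × A₁ × B₀ × B₁) (A₀ × A₁ × B₀ × B₁) ℂ) :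
    Matrix (A₀ × B₀) (A₀ × B₀) ℂ :=
  fun x y => ∑ a₁ : A₁, ∑ b₁ : B₁, J (x.1, a₁, x.2, b₁) (y.1, a₁, y.2, b₁)

/-- `π_{B₀} ⊗ Y`, reindexed to `A₀ × A₁ × B₀` with the subsystems in this order. -/
def piB0 (Y : Matrix (A₀ × A₁) (A₀ × A₁) ℂ) :
    Matrix (A₀ × A₁ × B₀) (A₀ × A₁ × B₀) ℂ :=
  fun x y => ((Fintype.card B₀ : ℂ))⁻¹ * (if x.2.2 = y.2.2 then 1 else 0) *
    Y (x.1, x.2.1) (y.1, y.2.1)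

/-- The non-signalling conditions for a Choi matrix on `A₀ × A₁ × B₀ × B₁`:
`Tr_{A₁} J = π_{A₀} ⊗ Tr_{A₀A₁} J` and `Tr_{B₁} J = π_{B₀} ⊗ Tr_{B₀B₁} J`. -/
def NS (J : Matrix (A₀ × A₁ × B₀ × B₁) (A₀ × A₁ × B₀ × B₁) ℂ) : Prop :=
  trA1 J = piFst (trA0A1 J) ∧ trB1 J = piB0 (trB0B1 J)

/-- The optimal value `Λ(J)` of the SDP whose logarithm is the max-relative entropy of
bidirectional classical communication of the bipartite channel with Choi matrix `J`. -/
def Lam (J : Matrix (A₀ × A₁ × B₀ × B₁) (A₀ × A₁ × B₀ × B₁) ℂ) : ℝ :=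
  sInf {l : ℝ | ∃ Y : Matrix (A₀ × A₁ × B₀ × B₁) (A₀ × A₁ × B₀ × B₁) ℂ,
    LoewnerLE J Y ∧ trA1B1 Y = l • (1 : Matrix (A₀ × B₀) (A₀ × B₀) ℂ) ∧ NS Y}

end FourSystems

/-- The optimal value `μ(K)` of the SDP whose negative logarithm is the bipartite
conditional min-entropy `H_min(𝐀|𝐁)` (for `K = Tr_{A₁} J` of a channel Choi matrix `J`). -/
def mu {A₀ B₀ B₁ : Type*} [Fintype A₀] [Fintype B₀] [Fintype B₁]
    [DecidableEq A₀] [DecidableEq B₀]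
    (K : Matrix (A₀ × B₀ × B₁) (A₀ × B₀ × B₁) ℂ) : ℝ :=
  sInf {m : ℝ | ∃ X : Matrix (B₀ × B₁) (B₀ × B₁) ℂ,
    trOut X = m • (1 : Matrix B₀ B₀ ℂ) ∧ LoewnerLE K (idFst X)}

/-- `Tr_{B₁}` of a matrix on `A₀ × B₀ × B₁`. -/
def trLast3 {A₀ B₀ B₁ : Type*} [Fintype B₁]
    (K : Matrix (A₀ × B₀ × B₁) (A₀ × B₀ × B₁) ℂ) : Matrix (A₀ × B₀) (A₀ × B₀) ℂ :=
  fun x y => ∑ b : B₁, K (x.1, x.2, b) (y.1, y.2, b)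

/-- Kronecker product of matrices on three-fold systems, reindexed to
`(A₀ × A₀') × (B₀ × B₀') × (B₁ × B₁')`. -/
def kron3 {A₀ B₀ B₁ A₀' B₀' B₁' : Type*}
    (K₁ : Matrix (A₀ × B₀ × B₁) (A₀ × B₀ × B₁) ℂ)
    (K₂ : Matrix (A₀' × B₀' × B₁') (A₀' × B₀' × B₁') ℂ) :
    Matrix ((A₀ × A₀') × (B₀ × B₀') × (B₁ × B₁'))
      ((A₀ × A₀') × (B₀ × B₀') × (B₁ × B₁')) ℂ :=
  fun x y =>
    K₁ (x.1.1, x.2.1.1, x.2.2.1) (y.1.1, y.2.1.1, y.2.2.1) *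
    K₂ (x.1.2, x.2.1.2, x.2.2.2) (y.1.2, y.2.1.2, y.2.2.2)

/-- `X ⊗ I_{B₀}` reindexed to `A₀ × A₁ × B₀`. -/
def tensIdB0 {A₀ A₁ B₀ : Type*} [DecidableEq B₀]
    (X : Matrix (A₀ × A₁) (A₀ × A₁) ℂ) : Matrix (A₀ × A₁ × B₀) (A₀ × A₁ × B₀) ℂ :=
  fun x y => X (x.1, x.2.1) (y.1, y.2.1) * (if x.2.2 = y.2.2 then 1 else 0)

/-- The optimal value `μ'(K')` of the SDP whose negative logarithm is the bipartite
conditional min-entropy `H_min(𝐁|𝐀)` (for `K' = Tr_{B₁} J` of a channel Choi matrix). -/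
def mu' {A₀ A₁ B₀ : Type*} [Fintype A₀] [Fintype A₁] [Fintype B₀]
    [DecidableEq A₀] [DecidableEq B₀]
    (K' : Matrix (A₀ × A₁ × B₀) (A₀ × A₁ × B₀) ℂ) : ℝ :=
  sInf {m : ℝ | ∃ X : Matrix (A₀ × A₁) (A₀ × A₁) ℂ,
    trOut X = m • (1 : Matrix A₀ A₀ ℂ) ∧ LoewnerLE K' (tensIdB0 X)}

/-!
Let `(λ, Y)` be feasible for `Λ(J)`. Tracing out `A₁` preserves the Loewner order, so `J ≤ Y` gives
`Tr_{A₁} J ≤ Tr_{A₁} Y`. Since `Y` is non-signalling,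
`Tr_{A₁} Y = π_{A₀} ⊗ Tr_{A₀A₁} Y = I_{A₀} ⊗ X` with `X = (1/|A₀|) • Tr_{A₀A₁} Y`, and tracing out
`A₀` in `Tr_{A₁B₁} Y = λ • I` gives `Tr_{B₁} X = λ • I`. So `(λ, X)` is feasible for
`μ(Tr_{A₁} J)`. To compare the infima, note that `Λ(J)` has a feasible point because `c • I` is
non-signalling and dominates `J` for large `c`, and that the feasible values of `μ(Tr_{A₁} J)` are
bounded below by partial sums of the diagonal of `Tr_{A₁} J`. Exchanging the two parties turns the
bound for `μ` into the bound for `μ'`.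
-/

section Feasibility

variable {A₀ A₁ B₀ B₁ : Type*} [Fintype A₀] [Fintype A₁] [Fintype B₀] [Fintype B₁]
  [DecidableEq A₀] [DecidableEq B₀]

/-- `(l, Y)` is a feasible point of the semidefinite program defining `Lam J`. -/
def IsLamFeasible (J : Matrix (A₀ × A₁ × B₀ × B₁) (A₀ × A₁ × B₀ × B₁) ℂ) (l : ℝ)
    (Y : Matrix (A₀ × A₁ × B₀ × B₁) (A₀ × A₁ × B₀ × B₁) ℂ) : Prop :=
  LoewnerLE J Y ∧ trA1B1 Y = l • (1 : Matrix (A₀ × B₀) (A₀ × B₀) ℂ) ∧ NS Y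

/-- `(m, X)` is a feasible point of the semidefinite program defining `mu K`. -/
def IsMuFeasible (K : Matrix (A₀ × B₀ × B₁) (A₀ × B₀ × B₁) ℂ) (m : ℝ)
    (X : Matrix (B₀ × B₁) (B₀ × B₁) ℂ) : Prop :=
  trOut X = m • (1 : Matrix B₀ B₀ ℂ) ∧ LoewnerLE K (idFst X)

end Feasibility

section LoewnerOrder

variable {n : Type*} [Fintype n]

theorem LoewnerLE.re_diag_le {M N : Matrix n n ℂ} (h : LoewnerLE M N) (i : n) :
    (M i i).re ≤ (N i i).re := by
  have hdiag : 0 ≤ N i i - M i i := h.diag_nonneg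
  exact (Complex.le_def.1 (sub_nonneg.1 hdiag)).1

open scoped Matrix.Norms.L2Operator MatrixOrder in
theorem exists_loewnerLE_smul_one [DecidableEq n] {M : Matrix n n ℂ} (hM : M.IsHermitian) :
    ∃ c : ℝ, LoewnerLE M (c • (1 : Matrix n n ℂ)) := by
  have h : M ≤ algebraMap ℝ (Matrix n n ℂ) ‖M‖ := IsSelfAdjoint.le_algebraMap_norm_self hM
  rw [Matrix.le_iff, Algebra.algebraMap_eq_smul_one] at h
  exact ⟨‖M‖, h⟩

theorem loewnerLE_reindex_iff {m : Type*} [Fintype m] (e : n ≃ m) {M N : Matrix n n ℂ} :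
    LoewnerLE (reindex e e M) (reindex e e N) ↔ LoewnerLE M N :=
  Matrix.posSemidef_submatrix_equiv (M := N - M) e.symm

end LoewnerOrder

theorem reindex_smul_one {R m n α : Type*} [DecidableEq m] [DecidableEq n] [Zero α] [One α]
    [SMulZeroClass R α] (e : n ≃ m) (c : R) :
    reindex e e (c • (1 : Matrix n n α)) = c • 1 := by
  rw [reindex_apply, Matrix.submatrix_smul, Pi.smul_apply, Pi.smul_apply,
    Matrix.submatrix_one_equiv]

section TensorFactors

variable {R S T : Type*}

theorem trOut_smul [Fintype T] [DistribSMul R ℂ] (c : R) (X : Matrix (S × T) (S × T) ℂ) :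
    trOut (c • X) = c • trOut X := by
  ext s s'
  exact Finset.smul_sum.symm

theorem trInp_smul [Fintype S] [DistribSMul R ℂ] (c : R) (X : Matrix (S × T) (S × T) ℂ) :
    trInp (c • X) = c • trInp X := by
  ext t t'
  exact Finset.smul_sum.symm

theorem trInp_one [Fintype S] [DecidableEq S] [DecidableEq T] :
    trInp (1 : Matrix (S × T) (S × T) ℂ) = Fintype.card S • 1 := by
  ext t t'
  simp [trInp, Matrix.one_apply]

variable [Fintype S] [DecidableEq S]

theorem piFst_smul [SMul R ℂ] [SMulCommClass R ℂ ℂ] (c : R) (X : Matrix T T ℂ) :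
    (piFst (c • X) : Matrix (S × T) (S × T) ℂ) = c • piFst X := by
  ext x y
  exact mul_smul_comm c _ _

theorem piFst_card_smul_one [Nonempty S] [DecidableEq T] :
    (piFst (Fintype.card S • (1 : Matrix T T ℂ)) : Matrix (S × T) (S × T) ℂ) = 1 := by
  ext ⟨s, t⟩ ⟨s', t'⟩
  by_cases hs : s = s' <;> simp [piFst, Matrix.one_apply, hs]

theorem idFst_inv_card_smul (X : Matrix T T ℂ) :
    (idFst ((Fintype.card S : ℝ)⁻¹ • X) : Matrix (S × T) (S × T) ℂ) = piFst X := by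
  ext x y
  simp only [idFst, piFst, Matrix.smul_apply, Complex.real_smul]
  push_cast
  ring

end TensorFactors

section FourPartyTraces

variable {R A₀ A₁ B₀ B₁ : Type*}

section OutputA

variable [Fintype A₁]

theorem trA1_sub (M N : Matrix (A₀ × A₁ × B₀ × B₁) (A₀ × A₁ × B₀ × B₁) ℂ) :
    trA1 (M - N) = trA1 M - trA1 N := by
  ext x y
  exact Finset.sum_sub_distrib _ _

theorem trA1_smul [DistribSMul R ℂ] (c : R)
    (M : Matrix (A₀ × A₁ × B₀ × B₁) (A₀ × A₁ × B₀ × B₁) ℂ) : trA1 (c • M) = c • trA1 M := by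
  ext x y
  exact Finset.smul_sum.symm

theorem trA1_one [DecidableEq A₀] [DecidableEq A₁] [DecidableEq B₀] [DecidableEq B₁] :
    trA1 (1 : Matrix (A₀ × A₁ × B₀ × B₁) (A₀ × A₁ × B₀ × B₁) ℂ) = Fintype.card A₁ • 1 := by
  ext x y
  simp [trA1, Matrix.one_apply, Prod.ext_iff]

theorem posSemidef_trA1 {M : Matrix (A₀ × A₁ × B₀ × B₁) (A₀ × A₁ × B₀ × B₁) ℂ}
    (hM : M.PosSemidef) : (trA1 M).PosSemidef := by
  have hsum : trA1 M = ∑ a : A₁, M.submatrix (fun x : A₀ × B₀ × B₁ ↦ (x.1, a, x.2))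
      (fun x ↦ (x.1, a, x.2)) := by
    ext x y
    simp [trA1, Matrix.sum_apply]
  rw [hsum]
  exact Matrix.posSemidef_sum _ fun a _ ↦ hM.submatrix _

theorem trA0A1_eq_trInp_trA1 [Fintype A₀]
    (M : Matrix (A₀ × A₁ × B₀ × B₁) (A₀ × A₁ × B₀ × B₁) ℂ) : trA0A1 M = trInp (trA1 M) :=
  rfl

theorem trA1_smul_one_eq_piFst [DecidableEq A₀] [DecidableEq A₁] [DecidableEq B₀] [DecidableEq B₁]
    [Fintype A₀] [Nonempty A₀] [DistribSMul R ℂ] [SMulCommClass R ℂ ℂ] (c : R) :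
    trA1 (c • (1 : Matrix (A₀ × A₁ × B₀ × B₁) (A₀ × A₁ × B₀ × B₁) ℂ)) =
      piFst (trA0A1 (c • (1 : Matrix (A₀ × A₁ × B₀ × B₁) (A₀ × A₁ × B₀ × B₁) ℂ))) := by
  rw [trA0A1_eq_trInp_trA1, trA1_smul, trInp_smul, piFst_smul, trA1_one, trInp_smul, piFst_smul,
    trInp_one, piFst_card_smul_one]

theorem LoewnerLE.trA1 [Fintype A₀] [Fintype B₀] [Fintype B₁]
    {M N : Matrix (A₀ × A₁ × B₀ × B₁) (A₀ × A₁ × B₀ × B₁) ℂ} (h : LoewnerLE M N) :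
    LoewnerLE (trA1 M) (trA1 N) := by
  rw [LoewnerLE, ← trA1_sub]
  exact posSemidef_trA1 h

end OutputA

section OutputsAB

variable [Fintype A₁] [Fintype B₁]

theorem trA1B1_smul [DistribSMul R ℂ] (c : R)
    (M : Matrix (A₀ × A₁ × B₀ × B₁) (A₀ × A₁ × B₀ × B₁) ℂ) : trA1B1 (c • M) = c • trA1B1 M := by
  ext x y
  simp only [trA1B1, Matrix.smul_apply, Finset.smul_sum]

theorem trA1B1_one [DecidableEq A₀] [DecidableEq A₁] [DecidableEq B₀] [DecidableEq B₁] :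
    trA1B1 (1 : Matrix (A₀ × A₁ × B₀ × B₁) (A₀ × A₁ × B₀ × B₁) ℂ) =
      (Fintype.card A₁ * Fintype.card B₁) • 1 := by
  ext x y
  simp [trA1B1, Matrix.one_apply, Prod.ext_iff]

theorem trOut_trA0A1 [Fintype A₀] (M : Matrix (A₀ × A₁ × B₀ × B₁) (A₀ × A₁ × B₀ × B₁) ℂ) :
    trOut (trA0A1 M) = trInp (trA1B1 M) := by
  ext b b'
  simp only [trOut, trA0A1, trInp, trA1B1]
  rw [Finset.sum_comm]
  exact Finset.sum_congr rfl fun _ _ ↦ Finset.sum_comm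

end OutputsAB

end FourPartyTraces

section SwapParties

variable {A₀ A₁ B₀ B₁ : Type*}

/-- Exchange of the two parties `A` and `B`, by which every statement about one party transfers to
the other. -/
def swapParties : Matrix (A₀ × A₁ × B₀ × B₁) (A₀ × A₁ × B₀ × B₁) ℂ ≃
    Matrix (B₀ × B₁ × A₀ × A₁) (B₀ × B₁ × A₀ × A₁) ℂ :=
  let e : A₀ × A₁ × B₀ × B₁ ≃ B₀ × B₁ × A₀ × A₁ :=
    (Equiv.prodAssoc A₀ A₁ (B₀ × B₁)).symm.trans
      ((Equiv.prodComm (A₀ × A₁) (B₀ × B₁)).trans (Equiv.prodAssoc B₀ B₁ (A₀ × A₁)))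
  reindex e e

/-- Moves the last tensor factor to the front, turning the index order of `mu'` into that of
`mu`. -/
def lastToFront : Matrix (A₀ × A₁ × B₀) (A₀ × A₁ × B₀) ℂ ≃
    Matrix (B₀ × A₀ × A₁) (B₀ × A₀ × A₁) ℂ :=
  let e : A₀ × A₁ × B₀ ≃ B₀ × A₀ × A₁ :=
    (Equiv.prodAssoc A₀ A₁ B₀).symm.trans (Equiv.prodComm (A₀ × A₁) B₀)
  reindex e e

theorem isHermitian_swapParties {J : Matrix (A₀ × A₁ × B₀ × B₁) (A₀ × A₁ × B₀ × B₁) ℂ}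
    (hJ : J.IsHermitian) : (swapParties J).IsHermitian :=
  hJ.submatrix _

theorem swapParties_smul_one {R : Type*} [SMulZeroClass R ℂ]
    [DecidableEq A₀] [DecidableEq A₁] [DecidableEq B₀] [DecidableEq B₁] (c : R) :
    swapParties (c • (1 : Matrix (A₀ × A₁ × B₀ × B₁) (A₀ × A₁ × B₀ × B₁) ℂ)) = c • 1 :=
  reindex_smul_one _ c

theorem trA1_swapParties [Fintype B₁] (Y : Matrix (A₀ × A₁ × B₀ × B₁) (A₀ × A₁ × B₀ × B₁) ℂ) :
    trA1 (swapParties Y) = lastToFront (trB1 Y) :=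
  rfl

theorem trA0A1_swapParties [Fintype B₀] [Fintype B₁]
    (Y : Matrix (A₀ × A₁ × B₀ × B₁) (A₀ × A₁ × B₀ × B₁) ℂ) :
    trA0A1 (swapParties Y) = trB0B1 Y :=
  rfl

theorem trA1B1_swapParties [Fintype A₁] [Fintype B₁]
    (Y : Matrix (A₀ × A₁ × B₀ × B₁) (A₀ × A₁ × B₀ × B₁) ℂ) :
    trA1B1 (swapParties Y) =
      reindex (Equiv.prodComm A₀ B₀) (Equiv.prodComm A₀ B₀) (trA1B1 Y) := by
  ext x y
  exact Finset.sum_comm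

theorem lastToFront_piB0 [Fintype B₀] [DecidableEq B₀] (X : Matrix (A₀ × A₁) (A₀ × A₁) ℂ) :
    lastToFront (piB0 X : Matrix (A₀ × A₁ × B₀) (A₀ × A₁ × B₀) ℂ) = piFst X :=
  rfl

theorem lastToFront_tensIdB0 [DecidableEq B₀] (X : Matrix (A₀ × A₁) (A₀ × A₁) ℂ) :
    lastToFront (tensIdB0 X : Matrix (A₀ × A₁ × B₀) (A₀ × A₁ × B₀) ℂ) = idFst X := by
  ext x y
  exact mul_comm _ _

theorem trA1_swapParties_eq_piFst_iff [Fintype B₀] [Fintype B₁] [DecidableEq B₀]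
    {Y : Matrix (A₀ × A₁ × B₀ × B₁) (A₀ × A₁ × B₀ × B₁) ℂ} :
    trA1 (swapParties Y) = piFst (trA0A1 (swapParties Y)) ↔ trB1 Y = piB0 (trB0B1 Y) := by
  rw [trA1_swapParties, trA0A1_swapParties, ← lastToFront_piB0, lastToFront.injective.eq_iff]

variable [Fintype A₀] [Fintype A₁] [Fintype B₀] [DecidableEq A₀] [DecidableEq B₀]

theorem mu_lastToFront (K : Matrix (A₀ × A₁ × B₀) (A₀ × A₁ × B₀) ℂ) :
    mu (lastToFront K) = mu' K := by
  simp only [mu, mu', ← lastToFront_tensIdB0]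
  simp only [lastToFront, loewnerLE_reindex_iff]

variable [Fintype B₁]

theorem NS_swapParties_iff {Y : Matrix (A₀ × A₁ × B₀ × B₁) (A₀ × A₁ × B₀ × B₁) ℂ} :
    NS (swapParties Y) ↔ NS Y := by
  rw [NS, NS, trA1_swapParties_eq_piFst_iff, ← trA1_swapParties_eq_piFst_iff (Y := swapParties Y)]
  exact and_comm

theorem isLamFeasible_swapParties_iff {J Y : Matrix (A₀ × A₁ × B₀ × B₁) (A₀ × A₁ × B₀ × B₁) ℂ}
    {l : ℝ} : IsLamFeasible (swapParties J) l (swapParties Y) ↔ IsLamFeasible J l Y := by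
  have htr : trA1B1 (swapParties Y) = l • (1 : Matrix (B₀ × A₀) (B₀ × A₀) ℂ) ↔
      trA1B1 Y = l • (1 : Matrix (A₀ × B₀) (A₀ × B₀) ℂ) := by
    rw [trA1B1_swapParties, ← reindex_smul_one (Equiv.prodComm A₀ B₀),
      EmbeddingLike.apply_eq_iff_eq]
  exact and_congr (loewnerLE_reindex_iff _) (and_congr htr NS_swapParties_iff)

theorem Lam_swapParties (J : Matrix (A₀ × A₁ × B₀ × B₁) (A₀ × A₁ × B₀ × B₁) ℂ) :
    Lam (swapParties J) = Lam J := by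
  unfold Lam
  congr 1 with l
  exact swapParties.surjective.exists.trans (exists_congr fun _ ↦ isLamFeasible_swapParties_iff)

end SwapParties

section Bounds

variable {A₀ A₁ B₀ B₁ : Type*} [Fintype A₀] [Fintype A₁] [Fintype B₀] [Fintype B₁]
  [DecidableEq A₀] [DecidableEq B₀]

theorem NS_smul_one [DecidableEq A₁] [DecidableEq B₁] [Nonempty A₀] [Nonempty B₀]
    {R : Type*} [DistribSMul R ℂ] [SMulCommClass R ℂ ℂ] (c : R) :
    NS (c • (1 : Matrix (A₀ × A₁ × B₀ × B₁) (A₀ × A₁ × B₀ × B₁) ℂ)) := by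
  refine ⟨trA1_smul_one_eq_piFst c, trA1_swapParties_eq_piFst_iff.1 ?_⟩
  rw [swapParties_smul_one]
  exact trA1_smul_one_eq_piFst c

theorem exists_isLamFeasible [Nonempty A₀] [Nonempty B₀]
    {J : Matrix (A₀ × A₁ × B₀ × B₁) (A₀ × A₁ × B₀ × B₁) ℂ} (hJ : J.IsHermitian) :
    ∃ l Y, IsLamFeasible J l Y := by
  classical
  obtain ⟨c, hc⟩ := exists_loewnerLE_smul_one hJ
  refine ⟨c * (Fintype.card A₁ * Fintype.card B₁ : ℕ), c • 1, hc, ?_, NS_smul_one c⟩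
  rw [trA1B1_smul, trA1B1_one, ← Nat.cast_smul_eq_nsmul ℝ, smul_smul]

theorem IsLamFeasible.isMuFeasible [Nonempty A₀]
    {J Y : Matrix (A₀ × A₁ × B₀ × B₁) (A₀ × A₁ × B₀ × B₁) ℂ} {l : ℝ} (h : IsLamFeasible J l Y) :
    IsMuFeasible (trA1 J) l ((Fintype.card A₀ : ℝ)⁻¹ • trA0A1 Y) := by
  obtain ⟨hle, htr, hns, -⟩ := h
  have hcard : (Fintype.card A₀ : ℝ) ≠ 0 := Nat.cast_ne_zero.2 Fintype.card_ne_zero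
  constructor
  · rw [trOut_smul, trOut_trA0A1, htr, trInp_smul, trInp_one, ← Nat.cast_smul_eq_nsmul ℝ,
      smul_comm l, inv_smul_smul₀ hcard]
  · rw [idFst_inv_card_smul, ← hns]
    exact hle.trA1

theorem IsMuFeasible.sum_re_diag_le {K : Matrix (A₀ × B₀ × B₁) (A₀ × B₀ × B₁) ℂ} {m : ℝ}
    {X : Matrix (B₀ × B₁) (B₀ × B₁) ℂ} (h : IsMuFeasible K m X) (a : A₀) (b : B₀) :
    ∑ t, (K (a, b, t) (a, b, t)).re ≤ m :=
  calc ∑ t, (K (a, b, t) (a, b, t)).re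
      ≤ ∑ t, (idFst X (a, b, t) (a, b, t)).re :=
        Finset.sum_le_sum fun t _ ↦ h.2.re_diag_le (a, b, t)
    _ = (trOut X b b).re := by simp [idFst, trOut]
    _ = m := by simp [h.1]

theorem IsMuFeasible.mu_le [Nonempty A₀] [Nonempty B₀]
    {K : Matrix (A₀ × B₀ × B₁) (A₀ × B₀ × B₁) ℂ} {m : ℝ} {X : Matrix (B₀ × B₁) (B₀ × B₁) ℂ}
    (h : IsMuFeasible K m X) : mu K ≤ m := by
  obtain ⟨a⟩ := ‹Nonempty A₀›
  obtain ⟨b⟩ := ‹Nonempty B₀›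
  refine csInf_le ⟨∑ t, (K (a, b, t) (a, b, t)).re, ?_⟩ ⟨X, h⟩
  rintro m' ⟨X', h'⟩
  exact IsMuFeasible.sum_re_diag_le h' a b

variable [Nonempty A₀] [Nonempty B₀] {J : Matrix (A₀ × A₁ × B₀ × B₁) (A₀ × A₁ × B₀ × B₁) ℂ}

theorem mu_trA1_le_Lam (hJ : J.IsHermitian) : mu (trA1 J) ≤ Lam J := by
  refine le_csInf (exists_isLamFeasible hJ) ?_
  rintro l ⟨Y, hY⟩
  exact (IsLamFeasible.isMuFeasible hY).mu_le

theorem mu'_trB1_le_Lam (hJ : J.IsHermitian) : mu' (trB1 J) ≤ Lam J :=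
  calc mu' (trB1 J) = mu (trA1 (swapParties J)) := by rw [trA1_swapParties, mu_lastToFront]
    _ ≤ Lam (swapParties J) := mu_trA1_le_Lam (isHermitian_swapParties hJ)
    _ = Lam J := Lam_swapParties J

end Bounds

theorem lam_ge_min_entropies_general
    {A₀ A₁ B₀ B₁ : Type*}
    [Fintype A₀] [Fintype A₁] [Fintype B₀] [Fintype B₁] [DecidableEq A₀] [DecidableEq B₀]
    [Nonempty A₀] [Nonempty B₀]
    (J : Matrix (A₀ × A₁ × B₀ × B₁) (A₀ × A₁ × B₀ × B₁) ℂ) (hJ : J.IsHermitian) :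
    (∀ (l : ℝ) (Y : Matrix (A₀ × A₁ × B₀ × B₁) (A₀ × A₁ × B₀ × B₁) ℂ),
      LoewnerLE J Y → trA1B1 Y = l • (1 : Matrix (A₀ × B₀) (A₀ × B₀) ℂ) → NS Y →
        trOut ((Fintype.card A₀ : ℝ)⁻¹ • trA0A1 Y) = l • (1 : Matrix B₀ B₀ ℂ) ∧
        LoewnerLE (trA1 J) (idFst ((Fintype.card A₀ : ℝ)⁻¹ • trA0A1 Y))) ∧
    mu (trA1 J) ≤ Lam J ∧ mu' (trB1 J) ≤ Lam J :=
  ⟨fun _ _ hle htr hns ↦ IsLamFeasible.isMuFeasible ⟨hle, htr, hns⟩,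
    mu_trA1_le_Lam hJ, mu'_trB1_le_Lam hJ⟩

/-- The max-relative entropy of bidirectional classical communication is bounded below by
minus the bipartite conditional min-entropies: every feasible `(λ, Y)` for `Λ(J)` yields,
via `X := (1/|A₀|) • Tr_{A₀A₁} Y`, a feasible point for `μ(Tr_{A₁} J)`, and
`Λ(J) ≥ μ(Tr_{A₁} J)`, `Λ(J) ≥ μ'(Tr_{B₁} J)`. -/
theorem lam_ge_min_entropies
    {A₀ A₁ B₀ B₁ : Type*}
    [Fintype A₀] [Fintype A₁] [Fintype B₀] [Fintype B₁]
    [DecidableEq A₀] [DecidableEq A₁] [DecidableEq B₀] [DecidableEq B₁]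
    [Nonempty A₀] [Nonempty A₁] [Nonempty B₀] [Nonempty B₁]
    (J : Matrix (A₀ × A₁ × B₀ × B₁) (A₀ × A₁ × B₀ × B₁) ℂ)
    (hJ : J.PosSemidef) (hTP : trA1B1 J = 1) :
    (∀ (l : ℝ) (Y : Matrix (A₀ × A₁ × B₀ × B₁) (A₀ × A₁ × B₀ × B₁) ℂ),
      LoewnerLE J Y → trA1B1 Y = l • (1 : Matrix (A₀ × B₀) (A₀ × B₀) ℂ) → NS Y →
        trOut ((Fintype.card A₀ : ℝ)⁻¹ • trA0A1 Y) = l • (1 : Matrix B₀ B₀ ℂ) ∧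
        LoewnerLE (trA1 J) (idFst ((Fintype.card A₀ : ℝ)⁻¹ • trA0A1 Y))) ∧
    mu (trA1 J) ≤ Lam J ∧ mu' (trB1 J) ≤ Lam J :=
  lam_ge_min_entropies_general J hJ.isHermitian
end
end

section
/- Reduction of the one-shot exact bidirectional simulation-cost SDP to the Duan–Winter point-to-point formula when Alice's output and Bob's input are trivial: let A₀ and B₁ be finite nonempty types and J ∈ Matrix ((A₀ × B₁)) ((A₀ × B₁)) ℂ positive semidefinite with Tr_{B₁} J = I_{A₀}. Then sInf {c : ℝ | ∃ (m : ℝ) (V W X : Matrix ((A₀ × B₁)) ((A₀ × B₁)) ℂ), c = ⌈m⌉ ∧ J ≤ V ∧ J ≤ W ∧ J ≤ X ∧ X = π_{A₀} ⊗ Tr_{A₀} X ∧ m • J = W ∧ X = V ∧ Tr_{B₁} V = m • I_{A₀} ∧ Tr_{B₁} X = Tr_{B₁} W} = ⌈ sInf { (Matrix.trace X').re | X' : Matrix B₁ B₁ ℂ, J ≤ I_{A₀} ⊗ X' } ⌉, i.e. the one-shot exact non-signalling-assisted simulation cost SDP with trivial systems A₁ and B₀ equals log ⌈ 2^{−H_min(A|B)_J}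 ⌉ with H_min the conditional min-entropy of the point-to-point channel. -/
open Matrix
open scoped ComplexOrder

noncomputable section

/-!
As `X = π ⊗ Tr_{A₀} X`, the feasible `X` of the cost SDP are exactly the matrices `1 ⊗ X'` with
`J ≤ 1 ⊗ X'`, and `m = Tr X'`; tracing this inequality over `B₁` gives `1 ≤ Tr X'`, so that
`W = m • J` dominates `J`. Hence the left-hand set consists of the ceilings of the values of the
min-entropy SDP. The ceiling is not continuous from the right, so it commutes with an infimum in
general only if the latter is attained. This is the case here: the feasible `X'` form a closed set
of positive semidefinite matrices, on which the trace dominates the norm and is therefore coercive.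
-/

section PositiveSemidefinite

variable {n : Type*}

theorem loewnerLE_smul_self [Fintype n] {M : Matrix n n ℂ} (hM : M.PosSemidef) {m : ℝ}
    (hm : 1 ≤ m) : LoewnerLE M (m • M) := by
  have hsub : m • M - M = (m - 1) • M := by rw [sub_smul, one_smul]
  rw [LoewnerLE, hsub]
  exact hM.smul (sub_nonneg.2 hm)

theorem isClosed_setOf_posSemidef {𝕜 : Type*} [RCLike 𝕜] [Finite n] :
    IsClosed {M : Matrix n n 𝕜 | M.PosSemidef} := by
  have := Fintype.ofFinite n
  simp only [Matrix.posSemidef_iff_dotProduct_mulVec, Matrix.IsHermitian, Set.ofPred_and,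
    Set.ofPred_forall]
  exact (isClosed_eq (by fun_prop) continuous_id).inter
    (isClosed_iInter fun x => isClosed_le continuous_const (by fun_prop))

variable [Fintype n]

open scoped MatrixOrder Matrix.Norms.L2Operator

theorem l2OpNorm_le_re_trace [DecidableEq n] {M : Matrix n n ℂ} (hM : M.PosSemidef) :
    ‖M‖ ≤ M.trace.re := by
  have htrace : M.trace.re = ∑ i, hM.isHermitian.eigenvalues i := by
    simp [hM.isHermitian.trace_eq_sum_eigenvalues]
  rw [CStarAlgebra.norm_le_iff_le_algebraMap M (Complex.nonneg_iff.1 hM.trace_nonneg).1 hM.nonneg,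
    le_algebraMap_iff_spectrum_le hM.isHermitian.isSelfAdjoint,
    hM.isHermitian.spectrum_real_eq_range_eigenvalues, htrace]
  rintro _ ⟨i, rfl⟩
  exact Finset.single_le_sum (fun j _ => hM.eigenvalues_nonneg j) (Finset.mem_univ i)

theorem loewnerLE_l2OpNorm_smul_one [DecidableEq n] {M : Matrix n n ℂ}
    (hM : M.IsHermitian) : LoewnerLE M ((‖M‖ : ℂ) • 1) := by
  have h : M ≤ algebraMap ℝ (Matrix n n ℂ) ‖M‖ := hM.isSelfAdjoint.le_algebraMap_norm_self
  rwa [Algebra.algebraMap_eq_smul_one, ← Complex.coe_smul] at h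

theorem exists_isMinOn_re_trace {s : Set (Matrix n n ℂ)} (hs : IsClosed s) (hne : s.Nonempty)
    (hpos : ∀ M ∈ s, M.PosSemidef) : ∃ M ∈ s, IsMinOn (fun N => N.trace.re) s M := by
  classical
  have : ProperSpace (Matrix n n ℂ) := FiniteDimensional.proper ℂ _
  obtain ⟨M₀, hM₀⟩ := hne
  refine ContinuousOn.exists_isMinOn' (by fun_prop) hs hM₀ ?_
  rw [Filter.eventually_inf_principal]
  filter_upwards [(tendsto_norm_cocompact_atTop (E := Matrix n n ℂ)).eventually_ge_atTop
    M₀.trace.re] with N hN hNs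
  exact hN.trans (l2OpNorm_le_re_trace (hpos N hNs))

end PositiveSemidefinite

section PartialTrace

variable {S T : Type*}

section trOut

variable [Fintype T]

theorem trOut_sub (M N : Matrix (S × T) (S × T) ℂ) : trOut (M - N) = trOut M - trOut N := by
  ext s s'
  simp [trOut]

theorem trOut_smul_s10 (m : ℝ) (M : Matrix (S × T) (S × T) ℂ) : trOut (m • M) = m • trOut M := by
  ext s s'
  simp [trOut, Finset.mul_sum]

theorem posSemidef_trOut {M : Matrix (S × T) (S × T) ℂ} (hM : M.PosSemidef) :
    (trOut M).PosSemidef := by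
  have hsum : trOut M = ∑ t, M.submatrix (fun s => (s, t)) (fun s => (s, t)) := by
    ext s s'
    simp [trOut, Matrix.sum_apply]
  rw [hsum]
  exact Matrix.posSemidef_sum _ fun t _ => hM.submatrix _

theorem LoewnerLE.trOut [Fintype S] {M N : Matrix (S × T) (S × T) ℂ} (h : LoewnerLE M N) :
    LoewnerLE (trOut M) (trOut N) := by
  rw [LoewnerLE, ← trOut_sub]
  exact posSemidef_trOut h

end trOut

variable [DecidableEq S]

open scoped Kronecker in
theorem idFst_eq_kronecker (X : Matrix T T ℂ) : idFst X = (1 : Matrix S S ℂ) ⊗ₖ X := by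
  ext x y
  simp [idFst, Matrix.one_apply]

theorem continuous_idFst :
    Continuous (idFst : Matrix T T ℂ → Matrix (S × T) (S × T) ℂ) := by
  refine continuous_matrix fun x y => ?_
  simp only [idFst]
  fun_prop

theorem idFst_smul_one [DecidableEq T] (c : ℂ) :
    (idFst (c • 1 : Matrix T T ℂ) : Matrix (S × T) (S × T) ℂ) = c • 1 := by
  rw [idFst_eq_kronecker, Matrix.kronecker_smul, Matrix.one_kronecker_one]

theorem posSemidef_of_idFst [Nonempty S] {X : Matrix T T ℂ}
    (h : (idFst X : Matrix (S × T) (S × T) ℂ).PosSemidef) : X.PosSemidef := by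
  obtain ⟨s⟩ := ‹Nonempty S›
  have hblock : (idFst X : Matrix (S × T) (S × T) ℂ).submatrix (Prod.mk s) (Prod.mk s) = X := by
    ext t t'
    simp [idFst]
  exact hblock ▸ h.submatrix (Prod.mk s)

theorem trOut_idFst [Fintype T] (X : Matrix T T ℂ) :
    trOut (idFst X) = X.trace • (1 : Matrix S S ℂ) := by
  ext s s'
  simp [trOut, idFst, Matrix.trace, Matrix.one_apply]

variable [Fintype S]

theorem trInp_idFst (X : Matrix T T ℂ) :
    trInp (idFst X : Matrix (S × T) (S × T) ℂ) = (Fintype.card S : ℂ) • X := by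
  ext t t'
  simp [trInp, idFst]

theorem piFst_eq_idFst_smul (X : Matrix T T ℂ) :
    (piFst X : Matrix (S × T) (S × T) ℂ) = idFst ((Fintype.card S : ℂ)⁻¹ • X) := by
  ext x y
  simp only [piFst, idFst, Matrix.smul_apply, smul_eq_mul]
  ring

theorem piFst_trInp_idFst [Nonempty S] (X : Matrix T T ℂ) :
    piFst (trInp (idFst X : Matrix (S × T) (S × T) ℂ)) =
      (idFst X : Matrix (S × T) (S × T) ℂ) := by
  rw [piFst_eq_idFst_smul, trInp_idFst, inv_smul_smul₀ (by simp)]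

end PartialTrace

section MinEntropy

variable {S T : Type*} [Fintype S] [Fintype T] [DecidableEq S]

/-- The objective values `Tr X'` of the conditional min-entropy SDP `J ≤ 1 ⊗ X'`, whose optimum is
`2^{-H_min}`. As feasible `X'` are only forced to be positive semidefinite when `J` is, the value is
recorded as a real part. -/
def minEntropyValues (J : Matrix (S × T) (S × T) ℂ) : Set ℝ :=
  {r | ∃ X' : Matrix T T ℂ, r = X'.trace.re ∧ LoewnerLE J (idFst X')}

variable {J : Matrix (S × T) (S × T) ℂ}

theorem exists_loewnerLE_idFst (hJ : J.IsHermitian) :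
    ∃ X : Matrix T T ℂ, LoewnerLE J (idFst X) := by
  classical
  obtain ⟨c, hc⟩ : ∃ c : ℂ, LoewnerLE J (c • 1) := ⟨_, loewnerLE_l2OpNorm_smul_one hJ⟩
  exact ⟨c • 1, by rwa [idFst_smul_one]⟩

theorem isClosed_setOf_loewnerLE_idFst (J : Matrix (S × T) (S × T) ℂ) :
    IsClosed {X : Matrix T T ℂ | LoewnerLE J (idFst X)} :=
  isClosed_setOf_posSemidef.preimage (continuous_idFst.sub continuous_const)

variable [Nonempty S]

theorem posSemidef_of_loewnerLE_idFst (hJ : J.PosSemidef) {X : Matrix T T ℂ}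
    (hX : LoewnerLE J (idFst X)) : X.PosSemidef :=
  posSemidef_of_idFst (S := S) (by simpa using hX.add hJ)

theorem exists_isLeast_minEntropyValues (hJ : J.PosSemidef) :
    ∃ r, IsLeast (minEntropyValues J) r := by
  obtain ⟨X, hX, hmin⟩ := exists_isMinOn_re_trace (isClosed_setOf_loewnerLE_idFst J)
    (exists_loewnerLE_idFst hJ.isHermitian) fun _ => posSemidef_of_loewnerLE_idFst hJ
  refine ⟨X.trace.re, ⟨X, rfl, hX⟩, ?_⟩
  rintro _ ⟨Y, rfl, hY⟩
  exact hmin hY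

theorem one_le_re_trace_of_loewnerLE_idFst (hTP : trOut J = 1) {X : Matrix T T ℂ}
    (hX : LoewnerLE J (idFst X)) : 1 ≤ X.trace.re := by
  have hle : LoewnerLE 1 (X.trace • (1 : Matrix S S ℂ)) := by
    simpa only [hTP, trOut_idFst] using hX.trOut
  obtain ⟨s⟩ := ‹Nonempty S›
  have hdiag : (0 : ℂ) ≤ X.trace - 1 := by simpa using hle.diag_nonneg (i := s)
  simpa using (Complex.nonneg_iff.1 hdiag).1

end MinEntropy

section CostSDP

variable {S T : Type*} [Fintype S] [Fintype T] [DecidableEq S]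

/-- The constraints of the one-shot exact simulation-cost SDP for `J`, with trivial systems `A₁` and
`B₀`; its objective is `⌈m⌉`. -/
def IsCostFeasible (J : Matrix (S × T) (S × T) ℂ) (m : ℝ) (V W X : Matrix (S × T) (S × T) ℂ) :
    Prop :=
  LoewnerLE J V ∧ LoewnerLE J W ∧ LoewnerLE J X ∧
    X = piFst (trInp X) ∧
    m • J = W ∧ X = V ∧
    trOut V = m • (1 : Matrix S S ℂ) ∧
    trOut X = trOut W

variable [Nonempty S] {J : Matrix (S × T) (S × T) ℂ}

theorem isCostFeasible_idFst (hJ : J.PosSemidef) (hTP : trOut J = 1) {X : Matrix T T ℂ}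
    (hX : LoewnerLE J (idFst X)) :
    IsCostFeasible J X.trace.re (idFst X) (X.trace.re • J) (idFst X) := by
  have htrace : X.trace = X.trace.re :=
    Complex.eq_re_of_ofReal_le (r := 0)
      (by simpa using (posSemidef_of_loewnerLE_idFst hJ hX).trace_nonneg)
  have hout : trOut (idFst X) = X.trace.re • (1 : Matrix S S ℂ) := by
    rw [trOut_idFst, ← Complex.coe_smul, ← htrace]
  exact ⟨hX, loewnerLE_smul_self hJ (one_le_re_trace_of_loewnerLE_idFst hTP hX), hX,
    (piFst_trInp_idFst X).symm, rfl, rfl, hout, by rw [hout, trOut_smul_s10, hTP]⟩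

theorem IsCostFeasible.mem_minEntropyValues {m : ℝ} {V W X : Matrix (S × T) (S × T) ℂ}
    (h : IsCostFeasible J m V W X) : m ∈ minEntropyValues J := by
  obtain ⟨hV, -, -, hpi, -, rfl, hout, -⟩ := h
  obtain ⟨X', rfl⟩ : ∃ X' : Matrix T T ℂ, X = idFst X' := ⟨_, hpi.trans (piFst_eq_idFst_smul _)⟩
  have htrace : X'.trace = m := by
    obtain ⟨s⟩ := ‹Nonempty S›
    simpa using congrFun₂ ((trOut_idFst X').symm.trans hout) s s
  exact ⟨X', by rw [htrace, Complex.ofReal_re], hV⟩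

end CostSDP

/-- Reduction of the one-shot exact bidirectional simulation-cost SDP to the Duan–Winter
point-to-point formula when Alice's output `A₁` and Bob's input `B₀` are trivial: the
specialized SDP equals `⌈ 2^{−H_min(A|B)_J} ⌉`, i.e. the ceiling of the optimal value of
the conditional min-entropy SDP `min { Tr X' | J ≤ I_{A₀} ⊗ X' }`. -/
theorem one_shot_cost_reduces_to_duan_winter
    {A₀ B₁ : Type*} [Fintype A₀] [Fintype B₁] [DecidableEq A₀] [DecidableEq B₁]
    [Nonempty A₀] [Nonempty B₁]
    (J : Matrix (A₀ × B₁) (A₀ × B₁) ℂ)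
    (hJ : J.PosSemidef) (hTP : trOut J = 1) :
    sInf {c : ℝ | ∃ (m : ℝ) (V W X : Matrix (A₀ × B₁) (A₀ × B₁) ℂ),
        c = (⌈m⌉ : ℝ) ∧
        LoewnerLE J V ∧ LoewnerLE J W ∧ LoewnerLE J X ∧
        X = piFst (trInp X) ∧
        m • J = W ∧ X = V ∧
        trOut V = m • (1 : Matrix A₀ A₀ ℂ) ∧
        trOut X = trOut W} =
      (⌈sInf {r : ℝ | ∃ X' : Matrix B₁ B₁ ℂ,
          r = (Matrix.trace X').re ∧ LoewnerLE J (idFst X')}⌉ : ℝ) := by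
  obtain ⟨r, hr⟩ := exists_isLeast_minEntropyValues hJ
  change _ = (⌈sInf (minEntropyValues J)⌉ : ℝ)
  rw [hr.csInf_eq]
  refine IsLeast.csInf_eq ⟨?_, ?_⟩
  · obtain ⟨X', rfl, hX'⟩ := hr.1
    exact ⟨_, _, _, _, rfl, isCostFeasible_idFst hJ hTP hX'⟩
  · rintro _ ⟨m, V, W, X, rfl, hfeas : IsCostFeasible J m V W X⟩
    exact_mod_cast Int.ceil_le_ceil (hr.2 hfeas.mem_minEntropyValues)
end
end
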